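/- Let K be algebraically closed of characteristic 0, Δ a simplicial complex on X = {x_1,...,x_n} with F ⊆ G faces of Δ, where G = {x_{s+1},...,x_n} is a facet and F = {x_{t+1},...,x_n}, 1 ≤ s ≤ t < n. Suppose q_1,...,q_h generate I_Δ up to radical with q_i = Σ_{j=1}^s a_{ij}x_j and a_{ij}x_j ∈ I_Δ for all i,j, and suppose h + 1 ≤ t. Let φ be the substitution x_k ↦ x_k^2, set q̄_i = φ(q_i) and ā_{ij} = φ(a_{ij})x_j (with ā_{ij} = 0 for j > s), let Ā' = (ā_{ij})_{i,j=1,...,h}, let ω_1,...,ω_h be the h-th roots of unity in K, and let A_{22} be the h×h matrix with entries ā_{ij} + δ_{ij}x_0(x_0 − ω_j x_{h+1}). Then, in R' = K[X ∪ {x_0}], I_{Δ'} = √( det A_{22} − x_0^{2h}, q̄_1 + x_0(x_0 − ω_1 x_{h+1})x_1, ..., q̄_h + x_0(x_0 − ω_h x_{h+1})x_h, x_0x_{h+2}, ..., x_0x_t ), where Δ' = Δ ∪ co_{x_0}F. In particular ara I_{Δ'} ≤ t. -/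

import Mathlib

open MvPolynomial

section Core

variable {V : Type*} [DecidableEq V]

/-- `Δ` is a simplicial complex on the vertex set `V`: every singleton is a face
and faces are closed under taking subsets. -/
def IsSimplicialComplex (Δ : Set (Finset V)) : Prop :=
  (∀ v : V, ({v} : Finset V) ∈ Δ) ∧ ∀ F ∈ Δ, ∀ G ⊆ F, G ∈ Δ

/-- The Stanley-Reisner ideal of `Δ` over `K`: generated by the squarefree monomials
whose support is not a face of `Δ`. -/
noncomputable def srIdeal (K : Type*) [Field K] (Δ : Set (Finset V)) :
    Ideal (MvPolynomial V K) :=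
  Ideal.span ((fun S : Finset V => ∏ v ∈ S, (X v : MvPolynomial V K)) '' {S | S ∉ Δ})

/-- The simplicial complex `Δ ∪ co_{x₀} F` on the vertex set `V ∪ {x₀}`,
realized as `Option V` with `none` playing the role of the new vertex `x₀`. -/
def coneUnion (Δ : Set (Finset V)) (F : Finset V) : Set (Finset (Option V)) :=
  ((fun G : Finset V => G.map Function.Embedding.some) '' Δ) ∪
    {G : Finset (Option V) | G ⊆ insert none (F.map Function.Embedding.some)}

/-- A facet is a maximal face. -/
def IsFacet (Δ : Set (Finset V)) (F : Finset V) : Prop :=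
  F ∈ Δ ∧ ∀ G ∈ Δ, F ⊆ G → F = G

/-- The prime ideal `P_F` generated by the variables not in `F`. -/
noncomputable def facePrime (K : Type*) [Field K] (F : Finset V) :
    Ideal (MvPolynomial V K) :=
  Ideal.span ((fun v : V => (X v : MvPolynomial V K)) '' {v : V | v ∉ F})

/-- The dimension of a simplicial complex. -/
noncomputable def scDim (Δ : Set (Finset V)) : ℕ := sSup (Finset.card '' Δ) - 1

/-- A subfacet of a (pure) complex: a face whose cardinality equals the dimension. -/
noncomputable def IsSubfacet (Δ : Set (Finset V)) (F : Finset V) : Prop :=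
  F ∈ Δ ∧ F.card = scDim Δ

end Core

/-- The arithmetical rank of an ideal: the least number of elements generating it
up to radical. -/
noncomputable def ara {R : Type*} [CommRing R] (I : Ideal R) : ℕ :=
  sInf {s : ℕ | ∃ a : Fin s → R, (Ideal.span (Set.range a)).radical = I.radical}

/-- The height of an ideal: the infimum of the heights of the primes containing it. -/
noncomputable def idealHeight {R : Type*} [CommRing R] (I : Ideal R) : ℕ∞ :=
  ⨅ p : {p : PrimeSpectrum R // I ≤ p.asIdeal}, Order.height p.1

section Stmt9

variable {n : ℕ} (K : Type*) [Field K]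

/-- The substitution `φ : xₖ ↦ xₖ²`. -/
noncomputable def sqSub : MvPolynomial (Fin n) K →ₐ[K] MvPolynomial (Fin n) K :=
  aeval fun v => (X v : MvPolynomial (Fin n) K) ^ 2

/-- The inclusion `R = K[x₁,…,xₙ] → R' = K[x₀,x₁,…,xₙ]`, with `none` playing
the role of the new variable `x₀`. -/
noncomputable def toR' : MvPolynomial (Fin n) K →ₐ[K] MvPolynomial (Option (Fin n)) K :=
  rename some

/-!
Both sides are radical, so it is enough to compare the primes `P` of `R'` containing them, and
`I_{Δ'} ⊆ P` just says that the variables outside `P` form a face of `Δ'`.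

If `x₀ ∈ P`, the generators reduce to `det Ā'` and the `q̄ᵢ`. The pullback of `P` under `φ` contains
the `qᵢ`, hence `I_Δ`; conversely, if it contains `I_Δ ∋ aᵢⱼxⱼ`, then `P` contains `φ(aᵢⱼ)xⱼ²`,
hence every entry `āᵢⱼ` and the determinant.

If `x₀ ∉ P`, work in the domain `R'/P`. The elements `q̄ᵢ + x₀(x₀ − ωᵢx_{h+1})xᵢ` are the entries of
`A₂₂ · (x₁, …, x_h)ᵀ`, because `āᵢⱼxⱼ = φ(aᵢⱼxⱼ)`. Since `det A₂₂ = x₀^{2h}` does not vanish,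
`x₁ = ⋯ = x_h = 0`. Then `A₂₂` is diagonal, and `∏ᵢ (x₀ − ωᵢx_{h+1}) = x₀^h − x_{h+1}^h` turns the
determinant equation into `x₀^h x_{h+1}^h = 0`, so `x_{h+1} = 0`. Together with `x₀xⱼ = 0` for
`h + 2 ≤ j ≤ t` this says that the nonzero variables lie in `F ∪ {x₀}`.

That the first `h` columns carry all of `qᵢ`, i.e. `s ≤ h`, follows from Krull's height theorem: the
facet `G` gives a minimal prime of `I_Δ` of height at least `s`.
-/

section General

variable {K}

section Radical

theorem eq_radical_of_forall_isPrime_le_iff {R : Type*} [CommSemiring R] {I J : Ideal R}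
    (hI : I.IsRadical) (h : ∀ P : Ideal R, P.IsPrime → (I ≤ P ↔ J ≤ P)) : I = J.radical := by
  rw [← hI.radical, Ideal.radical_eq_sInf, Ideal.radical_eq_sInf]
  congr 1
  ext P
  exact and_congr_left (h P)

theorem ara_radical_span_le_ncard {R : Type*} [CommRing R] {T : Set R} (hT : T.Finite) :
    ara (Ideal.span T).radical ≤ T.ncard := by
  have := hT.to_subtype
  let e : Fin T.ncard ≃ T := (Finite.equivFin T).symm
  refine Nat.sInf_le ⟨fun i => e i, ?_⟩
  rw [Set.range_comp' Subtype.val e, e.surjective.range_eq, Set.image_univ, Subtype.range_coe,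
    Ideal.radical_idem]

end Radical

section StanleyReisner

variable {V : Type*} {Δ : Set (Finset V)} {F : Finset V}

theorem IsSimplicialComplex.isLowerSet (hΔ : IsSimplicialComplex Δ) : IsLowerSet Δ :=
  fun S T hTS hS => hΔ.2 S hS T hTS

theorem X_mem_facePrime_iff {v : V} : (X v : MvPolynomial V K) ∈ facePrime K F ↔ v ∉ F := by
  classical
  rw [facePrime, mem_ideal_span_X_image]
  simp [support_X, Finsupp.single_apply]

instance facePrime_isPrime : (facePrime K F).IsPrime := by
  classical
  let restrict : MvPolynomial V K →ₐ[K] MvPolynomial V K := aeval fun v => if v ∈ F then X v else 0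
  have mk_comp_restrict : (Ideal.Quotient.mkₐ K (facePrime K F)).comp restrict =
      Ideal.Quotient.mkₐ K (facePrime K F) := by
    ext v
    by_cases hv : v ∈ F
    · simp [restrict, hv]
    · simp [restrict, hv, Ideal.Quotient.eq_zero_iff_mem.2 (X_mem_facePrime_iff.2 hv)]
  have facePrime_eq_ker : facePrime K F = RingHom.ker restrict := by
    refine le_antisymm (Ideal.span_le.2 ?_) fun f hf => ?_
    · rintro _ ⟨v, hv : v ∉ F, rfl⟩
      simp [restrict, hv]
    · have := DFunLike.congr_fun mk_comp_restrict f
      rw [AlgHom.comp_apply, RingHom.mem_ker.1 hf, map_zero] at this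
      exact Ideal.Quotient.eq_zero_iff_mem.1 this.symm
  rw [facePrime_eq_ker]
  exact RingHom.ker_isPrime restrict

theorem facePrime_le_facePrime_iff {G : Finset V} : facePrime K F ≤ facePrime K G ↔ G ⊆ F := by
  rw [facePrime, Ideal.span_le, Set.image_subset_iff]
  exact forall_congr' fun v => (imp_congr_right fun _ => X_mem_facePrime_iff).trans not_imp_not

theorem facePrime_strictAnti : StrictAnti (facePrime K : Finset V → Ideal (MvPolynomial V K)) :=
  strictAnti_of_le_iff_le fun _ _ => facePrime_le_facePrime_iff.symm

theorem card_le_height_facePrime_compl [Fintype V] [DecidableEq V] (S : Finset V) :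
    (S.card : ℕ∞) ≤ (facePrime K Sᶜ).height := by
  induction S using Finset.induction_on with
  | empty => simp
  | insert v S hv ih =>
    rw [Finset.card_insert_of_notMem hv, Nat.cast_succ]
    have hlt : facePrime K Sᶜ < facePrime K (insert v S)ᶜ :=
      facePrime_strictAnti (Finset.compl_ssubset_compl.2 (Finset.ssubset_insert hv))
    exact (add_le_add_left ih 1).trans (Ideal.height_add_one_le_of_lt_of_isPrime hlt)

theorem srIdeal_le_iff_of_isPrime {P : Ideal (MvPolynomial V K)} [P.IsPrime] :
    srIdeal K Δ ≤ P ↔ ∀ S : Finset V, (∀ v ∈ S, X v ∉ P) → S ∈ Δ := by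
  rw [srIdeal, Ideal.span_le, Set.image_subset_iff]
  refine forall_congr' fun S => ?_
  change (S ∉ Δ → ∏ v ∈ S, X v ∈ P) ↔ _
  rw [Ideal.IsPrime.prod_mem_iff, not_imp_comm]
  push Not
  rfl

theorem srIdeal_le_facePrime (hΔ : IsLowerSet Δ) (hF : F ∈ Δ) : srIdeal K Δ ≤ facePrime K F :=
  srIdeal_le_iff_of_isPrime.2 fun _ hS =>
    hΔ (fun v hv => not_not.1 fun hvF => hS v hv (X_mem_facePrime_iff.2 hvF)) hF

theorem srIdeal_eq_iInf_facePrime (hΔ : IsLowerSet Δ) :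
    srIdeal K Δ = ⨅ F : Δ, facePrime K F.1 := by
  refine le_antisymm (le_iInf fun F => srIdeal_le_facePrime hΔ F.2) fun f hf => ?_
  rw [Ideal.mem_iInf] at hf
  rw [f.as_sum]
  refine Ideal.sum_mem _ fun m hm => ?_
  have support_notMem : m.support ∉ Δ := fun hmΔ => by
    obtain ⟨v, hv, hmv⟩ := mem_ideal_span_X_image.1 (hf ⟨m.support, hmΔ⟩) m hm
    exact hv (Finsupp.mem_support_iff.2 hmv)
  refine Ideal.mem_of_dvd _ ?_ (Ideal.subset_span ⟨m.support, support_notMem, rfl⟩)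
  rw [monomial_eq]
  exact Dvd.dvd.mul_left (Finset.prod_dvd_prod_of_dvd _ _ fun v hv =>
    dvd_pow_self _ (Finsupp.mem_support_iff.1 hv)) _

theorem srIdeal_isRadical (hΔ : IsLowerSet Δ) : (srIdeal K Δ).IsRadical := by
  rw [srIdeal_eq_iInf_facePrime hΔ]
  exact Ideal.isRadical_iInf _ fun F => facePrime_isPrime.isRadical

theorem facePrime_mem_minimalPrimes (hΔ : IsLowerSet Δ) (hF : IsFacet Δ F) :
    facePrime K F ∈ (srIdeal K Δ).minimalPrimes := by
  classical
  refine ⟨⟨facePrime_isPrime, srIdeal_le_facePrime hΔ hF.1⟩, ?_⟩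
  rintro Q ⟨hQprime, hQ⟩ hQF
  refine Ideal.span_le.2 ?_
  rintro _ ⟨v, hv : v ∉ F, rfl⟩
  by_contra hvQ
  have insert_mem : insert v F ∈ Δ := by
    refine srIdeal_le_iff_of_isPrime.1 hQ _ fun w hw hwQ => ?_
    obtain rfl | hwF := Finset.mem_insert.1 hw
    · exact hvQ hwQ
    · exact X_mem_facePrime_iff.1 (hQF hwQ) hwF
  rw [hF.2 _ insert_mem (Finset.subset_insert v F)] at hv
  exact hv (Finset.mem_insert_self v F)

theorem card_compl_le_of_isFacet [Fintype V] [DecidableEq V] {ι : Type*} [Fintype ι]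
    (hΔ : IsLowerSet Δ) (hF : IsFacet Δ F) {q : ι → MvPolynomial V K}
    (hq : (Ideal.span (Set.range q)).radical = srIdeal K Δ) : Fᶜ.card ≤ Fintype.card ι := by
  have hmin : facePrime K F ∈ (Ideal.span (Set.range q)).minimalPrimes := by
    rw [← Ideal.radical_minimalPrimes, hq]
    exact facePrime_mem_minimalPrimes hΔ hF
  have hheight : (Fᶜ.card : ℕ∞) ≤ (Set.range q).ncard := calc
    (Fᶜ.card : ℕ∞) ≤ (facePrime K F).height := by
      simpa only [compl_compl] using card_le_height_facePrime_compl (K := K) Fᶜ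
    _ ≤ (Set.range q).ncard :=
      Ideal.height_le_card_of_mem_minimalPrimes_span (Set.finite_range q) hmin
  calc Fᶜ.card ≤ (Set.range q).ncard := Nat.cast_le.1 hheight
    _ ≤ Nat.card ι := Finite.card_range_le q
    _ = Fintype.card ι := Nat.card_eq_fintype_card

variable [Fintype V] {P : Ideal (MvPolynomial V K)}

open Classical in
/-- The vertices whose variables lie outside `P`, i.e. the coordinates that do not vanish at the
point `P` of affine space. -/
noncomputable def vertexSupport (P : Ideal (MvPolynomial V K)) : Finset V :=
  {v | X v ∉ P}

theorem mem_vertexSupport {v : V} : v ∈ vertexSupport P ↔ X v ∉ P := by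
  simp [vertexSupport]

theorem srIdeal_le_iff_vertexSupport_mem [P.IsPrime] (hΔ : IsLowerSet Δ) :
    srIdeal K Δ ≤ P ↔ vertexSupport P ∈ Δ := by
  rw [srIdeal_le_iff_of_isPrime]
  exact ⟨fun h => h _ fun v => mem_vertexSupport.1,
    fun hP S hS => hΔ (fun v hv => mem_vertexSupport.2 (hS v hv)) hP⟩

end StanleyReisner

section ConeUnion

variable {V : Type*} [DecidableEq V] {Δ : Set (Finset V)} {F : Finset V} {S : Finset (Option V)}

theorem coneUnion_isLowerSet (hΔ : IsLowerSet Δ) : IsLowerSet (coneUnion Δ F) := by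
  rintro S T hTS (⟨G, hG, rfl⟩ | hS)
  · obtain ⟨U, hUG, rfl⟩ := Finset.subset_map_iff.1 hTS
    exact Or.inl ⟨U, hΔ hUG hG, rfl⟩
  · exact Or.inr (Finset.Subset.trans hTS hS)

theorem mem_coneUnion_of_none_mem (hS : none ∈ S) :
    S ∈ coneUnion Δ F ↔ S.eraseNone ⊆ F := by
  constructor
  · rintro (⟨G, -, rfl⟩ | hSF) v hv
    · simp at hS
    · simpa using hSF (Finset.mem_eraseNone.1 hv)
  · refine fun hSF => Or.inr ?_
    rintro (_ | v) hv
    · simp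
    · simpa using hSF (Finset.mem_eraseNone.2 hv)

theorem mem_coneUnion_of_none_notMem (hΔ : IsLowerSet Δ) (hF : F ∈ Δ) (hS : none ∉ S) :
    S ∈ coneUnion Δ F ↔ S.eraseNone ∈ Δ := by
  constructor
  · rintro (⟨G, hG, rfl⟩ | hSF)
    · rwa [Finset.eraseNone_map_some]
    · refine hΔ (fun v hv => ?_) hF
      simpa using hSF (Finset.mem_eraseNone.1 hv)
  · refine fun hSΔ => Or.inl ⟨_, hSΔ, ?_⟩
    simp only [Finset.map_some_eraseNone, Finset.erase_eq_of_notMem hS]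

end ConeUnion

section LinearAlgebra

variable {D ι : Type*} [CommRing D] [IsDomain D] [Fintype ι] [Nonempty ι] {ω : ι → D}

theorem prod_sub_mul_eq_pow_sub_pow (hω : Function.Injective ω)
    (hpow : ∀ i, ω i ^ Fintype.card ι = 1) (x y : D) :
    ∏ i, (x - ω i * y) = x ^ Fintype.card ι - y ^ Fintype.card ι := by
  classical
  have hpos : 0 < Fintype.card ι := Fintype.card_pos
  have : NeZero (Fintype.card ι) := ⟨hpos.ne'⟩
  have card_le : Fintype.card ι ≤ Nat.card (rootsOfUnity (Fintype.card ι) D) := by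
    refine Nat.card_eq_fintype_card.ge.trans (Nat.card_le_card_of_injective
      (fun i => rootsOfUnity.mkOfPowEq (ω i) (hpow i)) fun i j hij => hω ?_)
    simpa using congrArg (fun u : rootsOfUnity _ D => ((u : Dˣ) : D)) hij
  obtain ⟨ζ, hζ⟩ := (HasEnoughRootsOfUnity.of_card_le card_le).prim
  have image_eq : Finset.univ.image ω = Polynomial.nthRootsFinset (Fintype.card ι) (1 : D) := by
    refine Finset.eq_of_subset_of_card_le (fun z hz => ?_) ?_
    · obtain ⟨i, -, rfl⟩ := Finset.mem_image.1 hz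
      exact (Polynomial.mem_nthRootsFinset hpos _).2 (hpow i)
    · rw [hζ.card_nthRootsFinset, Finset.card_image_of_injective _ hω, Finset.card_univ]
  rw [hζ.pow_sub_pow_eq_prod_sub_mul x y hpos, ← image_eq, Finset.prod_image hω.injOn]

open Matrix

theorem det_eq_pow_and_mulVec_eq_zero_iff [DecidableEq ι] (hω : Function.Injective ω)
    (hpow : ∀ i, ω i ^ Fintype.card ι = 1) (B : Matrix ι ι D) {x z : D} {y : ι → D} (hx : x ≠ 0) :
    (B * diagonal y + diagonal fun i => x * (x - ω i * z)).det = x ^ (2 * Fintype.card ι) ∧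
      (B * diagonal y + diagonal fun i => x * (x - ω i * z)) *ᵥ y = 0 ↔ y = 0 ∧ z = 0 := by
  have det_of_zero (z : D) : (B * diagonal (0 : ι → D) + diagonal fun i => x * (x - ω i * z)).det =
      x ^ Fintype.card ι * (x ^ Fintype.card ι - z ^ Fintype.card ι) := by
    rw [diagonal_zero', mul_zero, zero_add, det_diagonal, Finset.prod_mul_distrib,
      prod_sub_mul_eq_pow_sub_pow hω hpow, Finset.prod_const, Finset.card_univ]
  constructor
  · rintro ⟨hdet, hmul⟩
    obtain rfl : y = 0 :=
      eq_zero_of_mulVec_eq_zero (by rw [hdet]; exact pow_ne_zero _ hx) hmul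
    rw [det_of_zero] at hdet
    have : x ^ Fintype.card ι * z ^ Fintype.card ι = 0 := by linear_combination -hdet
    exact ⟨rfl, eq_zero_of_pow_eq_zero ((mul_eq_zero.1 this).resolve_left (pow_ne_zero _ hx))⟩
  · rintro ⟨rfl, rfl⟩
    refine ⟨?_, mulVec_zero _⟩
    rw [det_of_zero, zero_pow Fintype.card_ne_zero]
    ring

end LinearAlgebra

section ConeGenerators

theorem det_mem_of_forall_mem {R ι : Type*} [CommRing R] [Fintype ι] [DecidableEq ι] [Nonempty ι]
    {I : Ideal R} {A : Matrix ι ι R} (hA : ∀ i j, A i j ∈ I) : A.det ∈ I := by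
  rw [Matrix.det_apply']
  refine I.sum_mem fun σ _ => I.mul_mem_left _ ?_
  obtain ⟨i⟩ := ‹Nonempty ι›
  exact I.mem_of_dvd (Finset.dvd_prod_of_mem _ (Finset.mem_univ i)) (hA _ _)

variable {V ι : Type*}

/-- The substitution `xᵥ ↦ xᵥ²`, followed by the inclusion of `K[V]` into `K[V ∪ {x₀}]`. -/
noncomputable def squareLift : MvPolynomial V K →ₐ[K] MvPolynomial (Option V) K :=
  aeval fun v => X (some v) ^ 2

theorem toR'_sqSub {n : ℕ} (p : MvPolynomial (Fin n) K) : toR' K (sqSub K p) = squareLift p := by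
  have : (toR' K).comp (sqSub K) = squareLift (V := Fin n) := by
    ext v
    simp [toR', sqSub, squareLift]
  exact DFunLike.congr_fun this p

theorem squareLift_X (v : V) : squareLift (X v : MvPolynomial V K) = X (some v) ^ 2 :=
  aeval_X _ v

theorem vertexSupport_comap_squareLift [Fintype V] (P : Ideal (MvPolynomial (Option V) K))
    [P.IsPrime] : vertexSupport (P.comap squareLift) = (vertexSupport P).eraseNone := by
  ext v
  rw [mem_vertexSupport, Finset.mem_eraseNone, mem_vertexSupport, Ideal.mem_comap, squareLift_X,
    Ideal.IsPrime.pow_mem_iff_mem ‹_› 2 two_pos]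

open Matrix

variable [Fintype ι] [DecidableEq ι] (a : Matrix ι ι (MvPolynomial V K)) (e : ι → V) (z : V)
  (ω : ι → K) (T : Set V)

/-- The matrix `A₂₂`, with the vertices `x₁, …, x_h` given by `e` and `x_{h+1}` by `z`. -/
noncomputable def coneMatrix : Matrix ι ι (MvPolynomial (Option V) K) :=
  a.map squareLift * diagonal (fun j => X (some (e j))) +
    diagonal fun j => X none * (X none - C (ω j) * X (some z))

/-- The generators up to radical of the Stanley-Reisner ideal of the enlarged complex, where `T`
is the set of the vertices `x_{h+2}, …, x_t`. -/
noncomputable def coneGenerators : Set (MvPolynomial (Option V) K) :=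
  insert ((coneMatrix a e z ω).det - X none ^ (2 * Fintype.card ι))
    (Set.range (coneMatrix a e z ω *ᵥ fun j => X (some (e j))) ∪
      Set.range fun v : T => X none * X (some v.1))

theorem coneMatrix_apply (i j : ι) : coneMatrix a e z ω i j = squareLift (a i j) * X (some (e j)) +
    if i = j then X none * (X none - C (ω j) * X (some z)) else 0 := by
  rw [coneMatrix, Matrix.add_apply, mul_diagonal, map_apply, diagonal_apply]
  congr 1
  split_ifs with hij <;> simp [hij]

theorem coneMatrix_mulVec (i : ι) : (coneMatrix a e z ω *ᵥ fun j => X (some (e j))) i =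
    squareLift (∑ j, a i j * X (e j)) +
      X none * (X none - C (ω i) * X (some z)) * X (some (e i)) := by
  rw [coneMatrix, add_mulVec, Pi.add_apply, mulVec_diagonal, ← mulVec_mulVec]
  simp [mulVec, dotProduct, diagonal_apply, squareLift_X, pow_two]

variable {a e z ω T}

theorem span_coneGenerators_le_iff {P : Ideal (MvPolynomial (Option V) K)} :
    Ideal.span (coneGenerators a e z ω T) ≤ P ↔
      (coneMatrix a e z ω).det - X none ^ (2 * Fintype.card ι) ∈ P ∧
      (∀ i, (coneMatrix a e z ω *ᵥ fun j => X (some (e j))) i ∈ P) ∧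
      ∀ v ∈ T, X none * X (some v) ∈ P := by
  rw [Ideal.span_le, coneGenerators, Set.insert_subset_iff, Set.union_subset_iff,
    Set.range_subset_iff, Set.range_subset_iff, Subtype.forall]
  rfl

theorem span_coneGenerators_le_iff_of_X_none_mem [Nonempty ι]
    {I : Ideal (MvPolynomial V K)} (hmem : ∀ i j, a i j * X (e j) ∈ I)
    (hI : (Ideal.span (Set.range fun i => ∑ j, a i j * X (e j))).radical = I)
    {P : Ideal (MvPolynomial (Option V) K)} [P.IsPrime] (hP : X none ∈ P) :
    Ideal.span (coneGenerators a e z ω T) ≤ P ↔ I ≤ P.comap squareLift := by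
  have mulVec_mem_iff (i : ι) : (coneMatrix a e z ω *ᵥ fun j => X (some (e j))) i ∈ P ↔
      ∑ j, a i j * X (e j) ∈ P.comap squareLift := by
    rw [coneMatrix_mulVec, Ideal.add_mem_iff_left _ (by
      rw [mul_assoc]; exact P.mul_mem_right _ hP), Ideal.mem_comap]
  rw [span_coneGenerators_le_iff]
  constructor
  · rintro ⟨-, hmulVec, -⟩
    rw [← hI, Ideal.IsPrime.radical_le_iff inferInstance, Ideal.span_le, Set.range_subset_iff]
    exact fun i => (mulVec_mem_iff i).1 (hmulVec i)
  · intro hIP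
    refine ⟨?_, fun i => (mulVec_mem_iff i).2 (Ideal.sum_mem _ fun j _ => hIP (hmem i j)),
      fun v _ => P.mul_mem_right _ hP⟩
    have entry_mem (i j : ι) : coneMatrix a e z ω i j ∈ P := by
      have hsq : squareLift (a i j) * X (some (e j)) ^ 2 ∈ P := by
        simpa only [Ideal.mem_comap, map_mul, squareLift_X] using hIP (hmem i j)
      have hentry : squareLift (a i j) * X (some (e j)) ∈ P := by
        refine ‹P.IsPrime›.mem_of_pow_mem 2 ?_
        rw [mul_pow, pow_two (squareLift _), mul_assoc]
        exact P.mul_mem_left _ hsq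
      rw [coneMatrix_apply]
      split_ifs
      · exact P.add_mem hentry (P.mul_mem_right _ hP)
      · rwa [add_zero]
    exact P.sub_mem (det_mem_of_forall_mem entry_mem)
      (P.pow_mem_of_mem hP _ (Nat.mul_pos two_pos Fintype.card_pos))

theorem span_coneGenerators_le_iff_of_X_none_notMem [Nonempty ι] (hω : Function.Injective ω)
    (hpow : ∀ i, ω i ^ Fintype.card ι = 1)
    {P : Ideal (MvPolynomial (Option V) K)} [P.IsPrime] (hP : X none ∉ P) :
    Ideal.span (coneGenerators a e z ω T) ≤ P ↔
      ∀ v, v ∈ Set.range e ∨ v = z ∨ v ∈ T → X (some v) ∈ P := by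
  let π := Ideal.Quotient.mk P
  have map_coneMatrix : (coneMatrix a e z ω).map π =
      (a.map squareLift).map π * diagonal (fun j => π (X (some (e j)))) +
        diagonal fun j => π (X none) * (π (X none) - π (C (ω j)) * π (X (some z))) := by
    ext i j
    simp only [coneMatrix, map_apply, Matrix.add_apply, mul_diagonal, diagonal_apply, map_add,
      map_mul, map_sub, apply_ite π, map_zero]
  have hωπ : Function.Injective fun j => π (C (ω j)) :=
    (π.comp (C : K →+* MvPolynomial (Option V) K)).injective.comp hω
  have hpowπ (i : ι) : π (C (ω i)) ^ Fintype.card ι = 1 := by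
    rw [← map_pow, ← map_pow, hpow, map_one, map_one]
  have hxπ : π (X none) ≠ 0 := fun h => hP (Ideal.Quotient.eq_zero_iff_mem.1 h)
  have det_mem_iff : (coneMatrix a e z ω).det - X none ^ (2 * Fintype.card ι) ∈ P ↔
      ((coneMatrix a e z ω).map π).det = π (X none) ^ (2 * Fintype.card ι) := by
    rw [← Ideal.Quotient.eq, ← map_pow]
    exact Eq.congr_left (RingHom.map_det π _)
  have mulVec_mem_iff : (∀ i, (coneMatrix a e z ω *ᵥ fun j => X (some (e j))) i ∈ P) ↔
      ((coneMatrix a e z ω).map π *ᵥ fun j => π (X (some (e j)))) = 0 := by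
    rw [funext_iff]
    refine forall_congr' fun i => ?_
    rw [← Ideal.Quotient.eq_zero_iff_mem]
    exact Eq.congr_left (RingHom.map_mulVec π _ _ i)
  have X_none_mul_mem_iff (v : V) : X none * X (some v) ∈ P ↔ X (some v) ∈ P := by
    rw [‹P.IsPrime›.mul_mem_iff_mem_or_mem, or_iff_right hP]
  rw [span_coneGenerators_le_iff, ← and_assoc, det_mem_iff, mulVec_mem_iff, map_coneMatrix,
    det_eq_pow_and_mulVec_eq_zero_iff hωπ hpowπ _ hxπ, funext_iff]
  simp only [π, Pi.zero_apply, Ideal.Quotient.eq_zero_iff_mem, X_none_mul_mem_iff, or_imp,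
    forall_and, forall_eq, Set.forall_mem_range, and_assoc]

theorem srIdeal_coneUnion_eq_radical_span_coneGenerators [Finite V] [DecidableEq V] [Nonempty ι]
    {Δ : Set (Finset V)} {F : Finset V} (hΔ : IsLowerSet Δ) (hF : F ∈ Δ)
    (hcompl : ∀ v, v ∉ F ↔ v ∈ Set.range e ∨ v = z ∨ v ∈ T)
    (hmem : ∀ i j, a i j * X (e j) ∈ srIdeal K Δ)
    (hrad : (Ideal.span (Set.range fun i => ∑ j, a i j * X (e j))).radical = srIdeal K Δ)
    (hω : Function.Injective ω) (hpow : ∀ i, ω i ^ Fintype.card ι = 1) :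
    srIdeal K (coneUnion Δ F) = (Ideal.span (coneGenerators a e z ω T)).radical := by
  have := Fintype.ofFinite V
  have hΔ' : IsLowerSet (coneUnion Δ F) := coneUnion_isLowerSet hΔ
  refine eq_radical_of_forall_isPrime_le_iff (srIdeal_isRadical hΔ') fun P hP => ?_
  rw [srIdeal_le_iff_vertexSupport_mem hΔ']
  by_cases hx₀ : X none ∈ P
  · rw [span_coneGenerators_le_iff_of_X_none_mem hmem hrad hx₀,
      srIdeal_le_iff_vertexSupport_mem hΔ, vertexSupport_comap_squareLift,
      mem_coneUnion_of_none_notMem hΔ hF (by rwa [mem_vertexSupport, not_not])]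
  · rw [span_coneGenerators_le_iff_of_X_none_notMem hω hpow hx₀,
      mem_coneUnion_of_none_mem (mem_vertexSupport.2 hx₀)]
    refine forall_congr' fun v => ?_
    rw [← hcompl, Finset.mem_eraseNone, mem_vertexSupport, not_imp_comm]

theorem ncard_coneGenerators_le [Finite T] :
    (coneGenerators a e z ω T).ncard ≤ Fintype.card ι + T.ncard + 1 := by
  refine (Set.ncard_insert_le _ _).trans (Nat.succ_le_succ ((Set.ncard_union_le _ _).trans ?_))
  exact add_le_add ((Finite.card_range_le _).trans_eq Nat.card_eq_fintype_card)
    (Finite.card_range_le _)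

theorem coneGenerators_finite [Finite T] : (coneGenerators a e z ω T).Finite :=
  ((Set.finite_range _).union (Set.finite_range _)).insert _

end ConeGenerators

section InitialSegment

variable {s t h : ℕ}

theorem sum_filter_val_lt_eq_sum_castLE {M : Type*} [AddCommMonoid M] (hsh : s ≤ h) (hhn : h ≤ n)
    (f : Fin n → M) : ∑ j ∈ Finset.univ.filter (fun j : Fin n => (j : ℕ) < s), f j =
      ∑ j : Fin h, if (j : ℕ) < s then f (Fin.castLE hhn j) else 0 := by
  rw [← Finset.sum_filter]
  exact Finset.sum_bij' (fun j hj => ⟨j, (Finset.mem_filter.1 hj).2.trans_le hsh⟩)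
    (fun j _ => Fin.castLE hhn j) (by simp) (by simp) (by simp) (by simp) (by simp)

/-- The coefficients `(aᵢⱼ)` for `i, j = 1, …, h`, set to zero in the columns `j > s`. -/
noncomputable def leadingBlock (s : ℕ) (hhn : h ≤ n) (a : Fin h → Fin n → MvPolynomial (Fin n) K) :
    Matrix (Fin h) (Fin h) (MvPolynomial (Fin n) K) :=
  .of fun i j => if (j : ℕ) < s then a i (Fin.castLE hhn j) else 0

variable {a : Fin h → Fin n → MvPolynomial (Fin n) K}

theorem sum_leadingBlock_mul_X (hsh : s ≤ h) (hhn : h ≤ n) (i : Fin h) :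
    ∑ j, leadingBlock s hhn a i j * X (Fin.castLE hhn j) =
      ∑ j ∈ Finset.univ.filter (fun j : Fin n => (j : ℕ) < s), a i j * X j := by
  simp only [sum_filter_val_lt_eq_sum_castLE hsh hhn, leadingBlock, Matrix.of_apply, ite_mul,
    zero_mul]

theorem leadingBlock_mul_X_mem {I : Ideal (MvPolynomial (Fin n) K)}
    (hmem : ∀ i (j : Fin n), (j : ℕ) < s → a i j * X j ∈ I) (hhn : h ≤ n) (i j : Fin h) :
    leadingBlock s hhn a i j * X (Fin.castLE hhn j) ∈ I := by
  by_cases hjs : (j : ℕ) < s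
  · simpa [leadingBlock, hjs] using hmem i (Fin.castLE hhn j) hjs
  · simp [leadingBlock, hjs]

theorem coneMatrix_leadingBlock (hhn : h ≤ n) (z : Fin n) (ω : Fin h → K) :
    coneMatrix (leadingBlock s hhn a) (Fin.castLE hhn) z ω =
      Matrix.of fun i j : Fin h =>
        toR' K (if (j : ℕ) < s then
            sqSub K (a i (Fin.castLE hhn j)) * X (Fin.castLE hhn j) else 0) +
          if i = j then X none * (X none - C (ω j) * X (some z)) else 0 := by
  ext1 i j
  rw [coneMatrix_apply, leadingBlock, Matrix.of_apply, Matrix.of_apply]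
  congr 1
  split_ifs
  · rw [map_mul, toR'_sqSub, toR', rename_X]
  · rw [map_zero, map_zero, zero_mul]

theorem le_of_isFacet_filter_le_val {Δ : Set (Finset (Fin n))} (hΔ : IsLowerSet Δ)
    (hG : IsFacet Δ (Finset.univ.filter fun i : Fin n => s ≤ (i : ℕ))) (hhn : h < n)
    {q : Fin h → MvPolynomial (Fin n) K}
    (hq : (Ideal.span (Set.range q)).radical = srIdeal K Δ) : s ≤ h := by
  have hcard := card_compl_le_of_isFacet hΔ hG hq
  rw [Fintype.card_fin, Finset.compl_filter] at hcard
  simp only [not_le, Fin.card_filter_val_lt] at hcard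
  omega

theorem notMem_filter_le_val_iff (hht : h + 1 ≤ t) (htn : t ≤ n) (v : Fin n) :
    v ∉ Finset.univ.filter (fun i : Fin n => t ≤ (i : ℕ)) ↔
      v ∈ Set.range (Fin.castLE (Nat.le_of_succ_le (hht.trans htn))) ∨
        v = ⟨h, hht.trans htn⟩ ∨ v ∈ {j : Fin n | h + 1 ≤ (j : ℕ) ∧ (j : ℕ) < t} := by
  simp only [Finset.mem_filter, Finset.mem_univ, true_and, Fin.range_castLE, Set.mem_ofPred_eq,
    Fin.ext_iff]
  omega

theorem ncard_setOf_le_val_lt (r : ℕ) (htn : t ≤ n) :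
    {j : Fin n | r ≤ (j : ℕ) ∧ (j : ℕ) < t}.ncard = t - r := by
  have : Fin.val '' {j : Fin n | r ≤ (j : ℕ) ∧ (j : ℕ) < t} = Set.Ico r t := by
    ext k
    exact ⟨fun ⟨_, hj, hjk⟩ => hjk ▸ hj, fun hk => ⟨⟨k, hk.2.trans_le htn⟩, hk, rfl⟩⟩
  rw [← Set.ncard_image_of_injective _ Fin.val_injective, this, Set.ncard_Ico_nat]

end InitialSegment

end General

theorem srIdeal_coneUnion_eq_radical_case22_general
    (Δ : Set (Finset (Fin n))) (hΔ : IsLowerSet Δ)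
    (s t : ℕ) (htn : t ≤ n)
    (hG : IsFacet Δ (Finset.univ.filter fun i : Fin n => s ≤ (i : ℕ)))
    (hF : (Finset.univ.filter fun i : Fin n => t ≤ (i : ℕ)) ∈ Δ)
    {h : ℕ} (hht : h + 1 ≤ t)
    (q : Fin h → MvPolynomial (Fin n) K) (a : Fin h → Fin n → MvPolynomial (Fin n) K)
    (hdecomp : ∀ i, q i =
      ∑ j ∈ Finset.univ.filter (fun j : Fin n => (j : ℕ) < s), a i j * X j)
    (hmem : ∀ (i : Fin h) (j : Fin n), (j : ℕ) < s → a i j * X j ∈ srIdeal K Δ)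
    (hrad : (Ideal.span (Set.range q)).radical = srIdeal K Δ)
    (ω : Fin h → K) (hωinj : Function.Injective ω)
    (hω : Set.range ω = {z : K | z ^ h = 1}) :
    srIdeal K (coneUnion Δ (Finset.univ.filter fun i : Fin n => t ≤ (i : ℕ))) =
      (Ideal.span
        (insert
          ((Matrix.of fun i j : Fin h =>
              toR' K (if ((j : ℕ) < s) then
                  sqSub K (a i (Fin.castLE (Nat.le_of_succ_le (hht.trans htn)) j)) *
                    X (Fin.castLE (Nat.le_of_succ_le (hht.trans htn)) j)
                else 0) +
              if i = j then
                X none * (X none - C (ω j) * X (some (⟨h, hht.trans htn⟩ : Fin n)))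
              else 0).det - X none ^ (2 * h))
          ((Set.range fun i : Fin h =>
              toR' K (sqSub K (q i)) +
                X none * (X none - C (ω i) * X (some (⟨h, hht.trans htn⟩ : Fin n))) *
                  X (some (Fin.castLE (Nat.le_of_succ_le (hht.trans htn)) i))) ∪
           (Set.range fun j : {j : Fin n // h + 1 ≤ (j : ℕ) ∧ (j : ℕ) < t} =>
              (X none : MvPolynomial (Option (Fin n)) K) * X (some j.1))))).radical
    ∧ ara (srIdeal K (coneUnion Δ (Finset.univ.filter fun i : Fin n => t ≤ (i : ℕ)))) ≤ t := by
  have hhn : h ≤ n := Nat.le_of_succ_le (hht.trans htn)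
  have hsh : s ≤ h := le_of_isFacet_filter_le_val hΔ hG (hht.trans htn) hrad
  have q_eq (i : Fin h) : q i = ∑ j, leadingBlock s hhn a i j * X (Fin.castLE hhn j) :=
    (hdecomp i).trans (sum_leadingBlock_mul_X hsh hhn i).symm
  have : Nonempty (Fin h) := (hω.ge (one_pow h)).nonempty
  have ω_pow (i : Fin h) : ω i ^ Fintype.card (Fin h) = 1 := by
    rw [Fintype.card_fin]
    exact hω.le ⟨i, rfl⟩
  have srIdeal_eq := srIdeal_coneUnion_eq_radical_span_coneGenerators hΔ hF
    (notMem_filter_le_val_iff hht htn) (leadingBlock_mul_X_mem hmem hhn)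
    (by rwa [← funext q_eq]) hωinj ω_pow
  constructor
  · rw [srIdeal_eq, coneGenerators, ← coneMatrix_leadingBlock, Fintype.card_fin]
    simp only [toR'_sqSub, q_eq, ← coneMatrix_mulVec]
    rfl
  · rw [srIdeal_eq]
    refine (ara_radical_span_le_ncard coneGenerators_finite).trans
      (ncard_coneGenerators_le.trans ?_)
    rw [ncard_setOf_le_val_lt (h + 1) htn, Fintype.card_fin]
    omega

/-- Case 2.2 of Theorem 1: here the variable `xⱼ` (for `1 ≤ j ≤ n`) is the
variable with index `j-1 : Fin n`, so `G = {x_{s+1},…,xₙ}` is the set of indices `≥ s`,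
`F = {x_{t+1},…,xₙ}` the set of indices `≥ t`, and `x_{h+1}` is the variable of index `h`.
`K` is algebraically closed of characteristic `0`; `q₁,…,q_h` generate `I_Δ` up to radical,
`qᵢ = ∑_{j=1}^s aᵢⱼxⱼ` with `aᵢⱼxⱼ ∈ I_Δ`, and `h + 1 ≤ t`.  With `q̄ᵢ = φ(qᵢ)`,
`āᵢⱼ = φ(aᵢⱼ)xⱼ` (zero for `j > s`), `ω₁,…,ω_h` the `h`-th roots of unity, and `A₂₂` the
`h×h` matrix with entries `āᵢⱼ + δᵢⱼ·x₀(x₀ − ωⱼx_{h+1})`, the ideal `I_{Δ'}` is the radical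
of the ideal generated by `det A₂₂ − x₀^{2h}`, `q̄ᵢ + x₀(x₀ − ωᵢx_{h+1})xᵢ` (`1 ≤ i ≤ h`)
and `x₀xⱼ` (`h+2 ≤ j ≤ t`); in particular `ara I_{Δ'} ≤ t`. -/
theorem srIdeal_coneUnion_eq_radical_case22 [IsAlgClosed K] [CharZero K]
    (Δ : Set (Finset (Fin n))) (hΔ : IsSimplicialComplex Δ)
    (s t : ℕ) (hs : 1 ≤ s) (hst : s ≤ t) (htn : t < n)
    (hG : IsFacet Δ (Finset.univ.filter fun i : Fin n => s ≤ (i : ℕ)))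
    (hF : (Finset.univ.filter fun i : Fin n => t ≤ (i : ℕ)) ∈ Δ)
    {h : ℕ} (hht : h + 1 ≤ t)
    (q : Fin h → MvPolynomial (Fin n) K) (a : Fin h → Fin n → MvPolynomial (Fin n) K)
    (hdecomp : ∀ i, q i =
      ∑ j ∈ Finset.univ.filter (fun j : Fin n => (j : ℕ) < s), a i j * X j)
    (hmem : ∀ (i : Fin h) (j : Fin n), (j : ℕ) < s → a i j * X j ∈ srIdeal K Δ)
    (hrad : (Ideal.span (Set.range q)).radical = srIdeal K Δ)
    (ω : Fin h → K) (hωinj : Function.Injective ω)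
    (hω : Set.range ω = {z : K | z ^ h = 1}) :
    srIdeal K (coneUnion Δ (Finset.univ.filter fun i : Fin n => t ≤ (i : ℕ))) =
      (Ideal.span
        (insert
          ((Matrix.of fun i j : Fin h =>
              toR' K (if ((j : ℕ) < s) then
                  sqSub K (a i (Fin.castLE (le_of_lt (lt_trans (Nat.lt_of_succ_le hht) htn)) j)) *
                    X (Fin.castLE (le_of_lt (lt_trans (Nat.lt_of_succ_le hht) htn)) j)
                else 0) +
              if i = j then
                X none * (X none -
                  C (ω j) * X (some (⟨h, lt_trans (Nat.lt_of_succ_le hht) htn⟩ : Fin n)))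
              else 0).det - X none ^ (2 * h))
          ((Set.range fun i : Fin h =>
              toR' K (sqSub K (q i)) +
                X none * (X none -
                    C (ω i) * X (some (⟨h, lt_trans (Nat.lt_of_succ_le hht) htn⟩ : Fin n))) *
                  X (some (Fin.castLE (le_of_lt (lt_trans (Nat.lt_of_succ_le hht) htn)) i))) ∪
           (Set.range fun j : {j : Fin n // h + 1 ≤ (j : ℕ) ∧ (j : ℕ) < t} =>
              (X none : MvPolynomial (Option (Fin n)) K) * X (some j.1))))).radical
    ∧ ara (srIdeal K (coneUnion Δ (Finset.univ.filter fun i : Fin n => t ≤ (i : ℕ)))) ≤ t :=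
  srIdeal_coneUnion_eq_radical_case22_general K Δ hΔ.isLowerSet s t htn.le hG hF hht q a hdecomp
    hmem hrad ω hωinj hω

end Stmt9
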